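/- Let K be a positive natural number, let μ₀ : Fin K → ℝ be a center, let σ : Fin K → ℝ with σ k > 0 for all k (epistemic standard deviations), and let σ₀ > 0 (prior standard deviation). Consider the credal region B = { μ : Fin K → ℝ | ∀ k, |μ k − μ₀ k| ≤ σ k } of mean vectors, and for μ ∈ B let q_μ = ⊗_{k} N(μ k, (σ k)²) denote the diagonal Gaussian with mean μ, and let p₀ = ⊗_{k} N(0, σ₀²) denote the isotropic Gaussian prior. Define μ* : Fin K → ℝ by μ* k = μ₀ k + sign(μ₀ k)·σ k. Then the Hausdorff KL divergence D_H^+ = sup_{μ ∈ B} KL(q_μ ‖ p₀) is finite and equals (1/2)·∑_{k ∈ Fin K} ( (μ* k)²/σ₀² + (σ k)²/σ₀² − 1 − log((σ k)²/σ₀²) ). -/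

import Mathlib

open MeasureTheory ProbabilityTheory

/-- The Kullback–Leibler divergence `KL(q ‖ p) = ∫ log(dq/dp) dq`. -/
noncomputable def klDiv {α : Type*} [MeasurableSpace α]
    (q p : Measure α) : ℝ :=
  ∫ x, Real.log ((q.rnDeriv p) x).toReal ∂q

/-- The sign of a real number, with `sign 0` interpreted as `1`. -/
noncomputable def sgn (c : ℝ) : ℝ := if c < 0 then -1 else 1

/-!
The Kullback–Leibler divergence of product measures is the sum of the divergences of the factors,
and between two real Gaussians it grows with the distance of their means. The worst-case mean is
therefore found coordinate by coordinate: within `r` of `c`, the point furthest from the origin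
lies at distance `|c| + r`, on the side of the origin on which `c` lies.
-/

open scoped NNReal ENNReal

lemma indicator_univ_pi_prod {ι M : Type*} [Fintype ι] [CommMonoidWithZero M] {X : ι → Type*}
    (s : ∀ i, Set (X i)) (f : ∀ i, X i → M) :
    (Set.univ.pi s).indicator (fun x => ∏ i, f i (x i)) =
      fun x => ∏ i, (s i).indicator (f i) (x i) := by
  ext x
  by_cases hx : ∀ i, x i ∈ s i
  · simp [Set.indicator, hx]
  · obtain ⟨i, hi⟩ := not_forall.mp hx
    rw [Set.indicator_of_notMem (by simpa using hx)]
    exact (Finset.prod_eq_zero (Finset.mem_univ i) (Set.indicator_of_notMem hi _)).symm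

lemma ae_toReal_rnDeriv_pos {α : Type*} [MeasurableSpace α] {μ ν : Measure α} [SigmaFinite μ]
    [μ.HaveLebesgueDecomposition ν] (hμν : μ ≪ ν) : ∀ᵐ x ∂μ, 0 < (μ.rnDeriv ν x).toReal := by
  filter_upwards [Measure.rnDeriv_pos hμν, hμν.ae_le (Measure.rnDeriv_ne_top μ ν)]
    with x hpos hne_top
  exact ENNReal.toReal_pos hpos.ne' hne_top

section ProductMeasure

variable {ι : Type*} [Fintype ι] {X : ι → Type*} [∀ i, MeasurableSpace (X i)]

lemma lintegral_pi_prod_eq_prod (p : ∀ i, Measure (X i)) [∀ i, IsProbabilityMeasure (p i)]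
    {f : ∀ i, X i → ℝ≥0∞} (hf : ∀ i, Measurable (f i)) :
    ∫⁻ x, ∏ i, f i (x i) ∂Measure.pi p = ∏ i, ∫⁻ x, f i x ∂p i := by
  rw [lintegral_prod_eq_prod_lintegral_of_indepFun Finset.univ
    (fun i (x : ∀ i, X i) => f i (x i))
    (iIndepFun_pi fun i => (hf i).aemeasurable) fun i => (hf i).comp (measurable_pi_apply i)]
  exact Finset.prod_congr rfl fun i _ => (measurePreserving_eval p i).lintegral_comp (hf i)

lemma pi_withDensity (p : ∀ i, Measure (X i)) [∀ i, IsProbabilityMeasure (p i)]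
    {f : ∀ i, X i → ℝ≥0∞} (hf : ∀ i, Measurable (f i))
    [∀ i, SigmaFinite ((p i).withDensity (f i))] :
    Measure.pi (fun i => (p i).withDensity (f i)) =
      (Measure.pi p).withDensity fun x => ∏ i, f i (x i) := by
  refine Measure.pi_eq fun s hs => ?_
  calc (Measure.pi p).withDensity (fun x => ∏ i, f i (x i)) (Set.univ.pi s)
      = ∫⁻ x, ∏ i, (s i).indicator (f i) (x i) ∂Measure.pi p := by
        rw [withDensity_apply _ (.univ_pi hs), ← lintegral_indicator (.univ_pi hs),
          indicator_univ_pi_prod]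
    _ = ∏ i, ∫⁻ x, (s i).indicator (f i) x ∂p i :=
        lintegral_pi_prod_eq_prod p fun i => (hf i).indicator (hs i)
    _ = ∏ i, (p i).withDensity (f i) (s i) := by
        simp_rw [lintegral_indicator (hs _), withDensity_apply _ (hs _)]

variable {q p : ∀ i, Measure (X i)} [∀ i, SigmaFinite (q i)] [∀ i, IsProbabilityMeasure (p i)]

lemma pi_eq_withDensity_prod_rnDeriv (hqp : ∀ i, q i ≪ p i) :
    Measure.pi q = (Measure.pi p).withDensity fun x => ∏ i, (q i).rnDeriv (p i) (x i) := by
  have hq (i : ι) : (p i).withDensity ((q i).rnDeriv (p i)) = q i :=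
    Measure.withDensity_rnDeriv_eq _ _ (hqp i)
  have (i : ι) : SigmaFinite ((p i).withDensity ((q i).rnDeriv (p i))) := by
    rw [hq]; infer_instance
  rw [← pi_withDensity p fun i => Measure.measurable_rnDeriv _ _]
  simp_rw [hq]

lemma absolutelyContinuous_pi (hqp : ∀ i, q i ≪ p i) : Measure.pi q ≪ Measure.pi p := by
  rw [pi_eq_withDensity_prod_rnDeriv hqp]
  exact withDensity_absolutelyContinuous _ _

lemma rnDeriv_pi (hqp : ∀ i, q i ≪ p i) :
    (Measure.pi q).rnDeriv (Measure.pi p) =ᵐ[Measure.pi p]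
      fun x => ∏ i, (q i).rnDeriv (p i) (x i) := by
  rw [pi_eq_withDensity_prod_rnDeriv hqp]
  exact Measure.rnDeriv_withDensity _ <| Finset.measurable_prod _ fun i _ =>
    (Measure.measurable_rnDeriv _ _).comp (measurable_pi_apply i)

lemma llr_pi (hqp : ∀ i, q i ≪ p i) :
    llr (Measure.pi q) (Measure.pi p) =ᵐ[Measure.pi q] fun x => ∑ i, llr (q i) (p i) (x i) := by
  have hpos : ∀ᵐ x ∂Measure.pi q, ∀ i, 0 < ((q i).rnDeriv (p i) (x i)).toReal :=
    ae_all_iff.mpr fun i =>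
      (Measure.quasiMeasurePreserving_eval q i).ae (ae_toReal_rnDeriv_pos (hqp i))
  filter_upwards [(absolutelyContinuous_pi hqp).ae_le (rnDeriv_pi hqp), hpos] with x hx hxpos
  simp only [llr, hx, ENNReal.toReal_prod]
  exact Real.log_prod fun i _ => (hxpos i).ne'

end ProductMeasure

lemma klDiv_eq_integral_llr {α : Type*} [MeasurableSpace α] (q p : Measure α) :
    klDiv q p = ∫ x, llr q p x ∂q :=
  rfl

lemma klDiv_pi {ι : Type*} [Fintype ι] {X : ι → Type*} [∀ i, MeasurableSpace (X i)]
    {q p : ∀ i, Measure (X i)} [∀ i, IsProbabilityMeasure (q i)]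
    [∀ i, IsProbabilityMeasure (p i)] (hqp : ∀ i, q i ≪ p i)
    (hint : ∀ i, Integrable (llr (q i) (p i)) (q i)) :
    klDiv (Measure.pi q) (Measure.pi p) = ∑ i, klDiv (q i) (p i) := by
  simp_rw [klDiv_eq_integral_llr]
  rw [integral_congr_ae (llr_pi hqp), integral_finsetSum _ fun i _ => integrable_comp_eval (hint i)]
  exact Finset.sum_congr rfl fun i _ => integral_comp_eval (hint i).aestronglyMeasurable

lemma integral_sub_const_sq {Ω : Type*} [MeasurableSpace Ω] {P : Measure Ω}
    [IsProbabilityMeasure P] {X : Ω → ℝ} (hX : MemLp X 2 P) (c : ℝ) :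
    ∫ ω, (X ω - c) ^ 2 ∂P = Var[X; P] + (P[X] - c) ^ 2 := by
  have hvar := variance_eq_sub (X := fun ω => X ω - c) (hX.sub (memLp_const c))
  rw [variance_sub_const hX.aestronglyMeasurable,
    integral_sub (hX.integrable one_le_two) (integrable_const c), integral_const, probReal_univ,
    one_smul] at hvar
  exact eq_add_of_sub_eq hvar.symm

lemma log_gaussianPDFReal (m : ℝ) {v : ℝ≥0} (hv : v ≠ 0) (x : ℝ) :
    Real.log (gaussianPDFReal m v x) =
      -(Real.log (2 * Real.pi) + Real.log v) / 2 - (x - m) ^ 2 / (2 * v) := by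
  have hv' : (0 : ℝ) < v := by positivity
  rw [gaussianPDFReal, Real.log_mul (by positivity) (Real.exp_ne_zero _), Real.log_inv,
    Real.log_sqrt (by positivity), Real.log_mul (by positivity) hv'.ne', Real.log_exp]
  ring

lemma integrable_sub_const_sq_gaussianReal (m c : ℝ) (v : ℝ≥0) :
    Integrable (fun x => (x - c) ^ 2) (gaussianReal m v) :=
  ((memLp_id_gaussianReal 2).sub (memLp_const c)).integrable_sq

lemma integral_sub_const_sq_gaussianReal (m c : ℝ) (v : ℝ≥0) :
    ∫ x, (x - c) ^ 2 ∂gaussianReal m v = v + (m - c) ^ 2 := by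
  simpa using integral_sub_const_sq (memLp_id_gaussianReal (μ := m) (v := v) 2) c

section Gaussian

variable (m₁ m₂ : ℝ) {v₁ v₂ : ℝ≥0}

lemma gaussianReal_absolutelyContinuous_gaussianReal (hv₁ : v₁ ≠ 0) (hv₂ : v₂ ≠ 0) :
    gaussianReal m₁ v₁ ≪ gaussianReal m₂ v₂ :=
  (gaussianReal_absolutelyContinuous m₁ hv₁).trans (gaussianReal_absolutelyContinuous' m₂ hv₂)

lemma llr_gaussianReal (hv₁ : v₁ ≠ 0) (hv₂ : v₂ ≠ 0) :
    llr (gaussianReal m₁ v₁) (gaussianReal m₂ v₂) =ᵐ[gaussianReal m₁ v₁] fun x =>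
      (x - m₂) ^ 2 / (2 * v₂) - (x - m₁) ^ 2 / (2 * v₁) - Real.log (v₁ / v₂) / 2 := by
  have hac₁ := gaussianReal_absolutelyContinuous m₁ hv₁
  have hratio := (gaussianReal_absolutelyContinuous_gaussianReal m₁ m₂ hv₁ hv₂).ae_le
    (Measure.rnDeriv_eq_div hac₁ (gaussianReal_absolutelyContinuous m₂ hv₂))
  filter_upwards [hratio, hac₁.ae_le (rnDeriv_gaussianReal m₁ v₁),
    hac₁.ae_le (rnDeriv_gaussianReal m₂ v₂)] with x hx hx₁ hx₂
  rw [llr, hx, hx₁, hx₂, ENNReal.toReal_div, toReal_gaussianPDF, toReal_gaussianPDF,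
    Real.log_div (gaussianPDFReal_pos m₁ v₁ x hv₁).ne' (gaussianPDFReal_pos m₂ v₂ x hv₂).ne',
    log_gaussianPDFReal m₁ hv₁, log_gaussianPDFReal m₂ hv₂,
    Real.log_div (by positivity) (by positivity)]
  ring

lemma integrable_llr_gaussianReal (hv₁ : v₁ ≠ 0) (hv₂ : v₂ ≠ 0) :
    Integrable (llr (gaussianReal m₁ v₁) (gaussianReal m₂ v₂)) (gaussianReal m₁ v₁) := by
  refine Integrable.congr ?_ (llr_gaussianReal m₁ m₂ hv₁ hv₂).symm
  exact (((integrable_sub_const_sq_gaussianReal _ _ _).div_const _).sub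
    ((integrable_sub_const_sq_gaussianReal _ _ _).div_const _)).sub (integrable_const _)

lemma klDiv_gaussianReal (hv₁ : v₁ ≠ 0) (hv₂ : v₂ ≠ 0) :
    klDiv (gaussianReal m₁ v₁) (gaussianReal m₂ v₂) =
      1 / 2 * ((m₁ - m₂) ^ 2 / v₂ + v₁ / v₂ - 1 - Real.log (v₁ / v₂)) := by
  have hint (c d : ℝ) := (integrable_sub_const_sq_gaussianReal m₁ c v₁).div_const d
  rw [klDiv_eq_integral_llr, integral_congr_ae (llr_gaussianReal m₁ m₂ hv₁ hv₂),
    integral_sub (by exact (hint _ _).sub (hint _ _)) (integrable_const _),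
    integral_sub (hint _ _) (hint _ _), integral_div, integral_div,
    integral_sub_const_sq_gaussianReal, integral_sub_const_sq_gaussianReal, integral_const,
    probReal_univ, one_smul]
  field_simp
  ring

end Gaussian

lemma klDiv_pi_gaussianReal {ι : Type*} [Fintype ι] (m₁ m₂ : ι → ℝ) {v₁ v₂ : ι → ℝ≥0}
    (hv₁ : ∀ k, v₁ k ≠ 0) (hv₂ : ∀ k, v₂ k ≠ 0) :
    klDiv (Measure.pi fun k => gaussianReal (m₁ k) (v₁ k))
        (Measure.pi fun k => gaussianReal (m₂ k) (v₂ k)) =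
      1 / 2 * ∑ k, ((m₁ k - m₂ k) ^ 2 / v₂ k + v₁ k / v₂ k - 1 - Real.log (v₁ k / v₂ k)) := by
  rw [klDiv_pi
    (fun k => gaussianReal_absolutelyContinuous_gaussianReal _ _ (hv₁ k) (hv₂ k))
    (fun k => integrable_llr_gaussianReal _ _ (hv₁ k) (hv₂ k)), Finset.mul_sum]
  exact Finset.sum_congr rfl fun k _ => klDiv_gaussianReal _ _ (hv₁ k) (hv₂ k)

lemma abs_sgn (c : ℝ) : |sgn c| = 1 := by
  unfold sgn
  split_ifs <;> simp

lemma sgn_mul_abs (c : ℝ) : sgn c * |c| = c := by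
  unfold sgn
  split_ifs with hc
  · simp [abs_of_neg hc]
  · simp [abs_of_nonneg (not_lt.mp hc)]

lemma abs_add_sgn_mul (c : ℝ) {r : ℝ} (hr : 0 ≤ r) : |c + sgn c * r| = |c| + r := by
  calc |c + sgn c * r| = |sgn c * (|c| + r)| := by rw [mul_add, sgn_mul_abs]
    _ = |c| + r := by rw [abs_mul, abs_sgn, one_mul, abs_of_nonneg (by positivity)]

lemma sq_le_sq_add_sgn_mul {x c r : ℝ} (hx : |x - c| ≤ r) : x ^ 2 ≤ (c + sgn c * r) ^ 2 := by
  rw [sq_le_sq, abs_add_sgn_mul c ((abs_nonneg _).trans hx)]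
  linarith [abs_sub_abs_le_abs_sub x c]

theorem hausdorffKL_closed_form_general {ι : Type*} [Fintype ι] (μ₀ m r : ι → ℝ)
    (hr : ∀ k, 0 ≤ r k) (v w : ι → ℝ≥0) (hv : ∀ k, v k ≠ 0) (hw : ∀ k, w k ≠ 0) :
    IsGreatest
      ((fun μ : ι → ℝ => klDiv (Measure.pi fun k => gaussianReal (μ k) (v k))
        (Measure.pi fun k => gaussianReal (m k) (w k))) '' {μ | ∀ k, |μ k - μ₀ k| ≤ r k})
      (1 / 2 * ∑ k, ((μ₀ k + sgn (μ₀ k - m k) * r k - m k) ^ 2 / w k + v k / w k - 1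
        - Real.log (v k / w k))) := by
  simp_rw [klDiv_pi_gaussianReal _ m hv hw]
  constructor
  · refine ⟨fun k => μ₀ k + sgn (μ₀ k - m k) * r k, fun k => ?_, rfl⟩
    rw [add_sub_cancel_left, abs_mul, abs_sgn, one_mul, abs_of_nonneg (hr k)]
  · rintro _ ⟨μ, hμ, rfl⟩
    have hsq (k : ι) : (μ k - m k) ^ 2 ≤ (μ₀ k + sgn (μ₀ k - m k) * r k - m k) ^ 2 := by
      rw [add_sub_right_comm]
      exact sq_le_sq_add_sgn_mul (by simpa using hμ k)
    beta_reduce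
    gcongr _ * ∑ k, (?_ / _ + _ - _ - _) with k
    exact hsq k

/-- **Closed-Form Hausdorff KL.** For the credal set of diagonal Gaussians
with fixed diagonal covariance `diag(σ₁², …, σ_K²)` whose mean ranges over the
coordinatewise box of radius `σ k` around the center `μ₀`, the worst-case
(Hausdorff) KL divergence to the isotropic prior `N(0, σ₀² I)` is finite
(indeed attained) and equals
`½ ∑ₖ ((μ* k)²/σ₀² + (σ k)²/σ₀² − 1 − log((σ k)²/σ₀²))`
where `μ* k = μ₀ k + sign(μ₀ k)·σ k`. -/
theorem hausdorffKL_closed_form (K : ℕ) (hK : 0 < K)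
    (μ₀ : Fin K → ℝ) (σ : Fin K → ℝ) (hσ : ∀ k, 0 < σ k)
    (σ₀ : ℝ) (hσ₀ : 0 < σ₀)
    (B : Set (Fin K → ℝ)) (hB : B = {μ | ∀ k, |μ k - μ₀ k| ≤ σ k})
    (kl : (Fin K → ℝ) → ℝ)
    (hkl : kl = fun μ => klDiv
        (Measure.pi fun k => gaussianReal (μ k) ⟨(σ k) ^ 2, sq_nonneg (σ k)⟩)
        (Measure.pi fun _ => gaussianReal 0 ⟨σ₀ ^ 2, sq_nonneg σ₀⟩))
    (μstar : Fin K → ℝ) (hμstar : μstar = fun k => μ₀ k + sgn (μ₀ k) * σ k) :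
    IsGreatest (kl '' B)
      ((1 / 2) * ∑ k : Fin K,
        ((μstar k) ^ 2 / σ₀ ^ 2 + (σ k) ^ 2 / σ₀ ^ 2 - 1
          - Real.log ((σ k) ^ 2 / σ₀ ^ 2))) := by
  subst hB hkl hμstar
  have hgreatest := hausdorffKL_closed_form_general μ₀ 0 σ (fun k => (hσ k).le)
    (fun k => ⟨σ k ^ 2, sq_nonneg (σ k)⟩) (fun _ => ⟨σ₀ ^ 2, sq_nonneg σ₀⟩)
    (fun k => NNReal.ne_iff.mp (pow_pos (hσ k) 2).ne') fun _ => NNReal.ne_iff.mp (pow_pos hσ₀ 2).ne'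
  simp only [Pi.zero_apply, sub_zero] at hgreatest
  exact hgreatest
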